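/- Let R be an s-unital purely infinite exchange ring. Then the matrix ring Mₙ(R) is properly purely infinite for every n ≥ 1. -/

import Mathlib

/-- `x ≼ y` for square matrices over a (possibly nonunital) ring: `x = α * y * β`
for some rectangular matrices `α`, `β`. -/
def MatSub {R : Type*} [NonUnitalRing R] {k n : ℕ}
    (x : Matrix (Fin k) (Fin k) R) (y : Matrix (Fin n) (Fin n) R) : Prop :=
  ∃ (α : Matrix (Fin k) (Fin n) R) (β : Matrix (Fin n) (Fin k) R), x = α * y * β

/-- `a ⊕ b ≼ c` for ring elements: the block-diagonal matrix `diag(a, b)` satisfies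
`diag(a,b) ≼ (c)` as square matrices. -/
def PairSub {R : Type*} [NonUnitalRing R] (a b c : R) : Prop :=
  MatSub !![a, 0; 0, b] !![c]

/-- `a ≼ b` for ring elements: `a = α * b * β` for some ring elements. -/
def ElemSub {R : Type*} [NonUnitalRing R] (a b : R) : Prop :=
  ∃ α β : R, a = α * b * β

/-- `K(a) = { x | a ⊕ x ≼ a }`. -/
def KSet {R : Type*} [NonUnitalRing R] (a : R) : Set R := { x | PairSub a x a }

/-- An element `a` is infinite if `a ⊕ x ≼ a` for some nonzero `x`, i.e. `K(a) ≠ 0`. -/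
def IsInfiniteElem {R : Type*} [NonUnitalRing R] (a : R) : Prop :=
  ∃ x : R, x ≠ 0 ∧ PairSub a x a

/-- An element `a` is properly infinite if `a ≠ 0` and `a ⊕ a ≼ a`. -/
def IsProperlyInfiniteElem {R : Type*} [NonUnitalRing R] (a : R) : Prop :=
  a ≠ 0 ∧ PairSub a a a

/-- A ring is s-unital if each element `x` admits `u, v` with `u * x = x` and `x * v = x`. -/
def IsSUnitalRing (R : Type*) [NonUnitalRing R] : Prop :=
  ∀ x : R, (∃ u : R, u * x = x) ∧ (∃ v : R, x * v = x)

/-- `b` belongs to `RaR`, the set of finite sums `Σ xᵢ * a * yᵢ`. -/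
def MemRaR {R : Type*} [NonUnitalRing R] (a b : R) : Prop :=
  ∃ (n : ℕ) (x y : Fin n → R), b = ∑ i, x i * a * y i

/-- A (possibly nonunital) ring is a division ring: it has a nonzero multiplicative identity
with respect to which every nonzero element is two-sided invertible. -/
def IsDivisionRingPred (R : Type*) [NonUnitalRing R] : Prop :=
  ∃ u : R, u ≠ 0 ∧ (∀ x : R, u * x = x ∧ x * u = x) ∧
    ∀ x : R, x ≠ 0 → ∃ y : R, x * y = u ∧ y * x = u

/-- A ring `R` is purely infinite if no quotient of `R` by a two-sided ideal is a division
ring, and `b ∈ RaR` implies `b = x * a * y` for some `x, y ∈ R`. -/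
def IsPurelyInfiniteRing (R : Type*) [NonUnitalRing R] : Prop :=
  (∀ I : TwoSidedIdeal R, ¬ IsDivisionRingPred I.ringCon.Quotient) ∧
  ∀ a b : R, MemRaR a b → ElemSub b a

/-- A ring is properly purely infinite if every nonzero element is properly infinite. -/
def IsProperlyPurelyInfiniteRing (R : Type*) [NonUnitalRing R] : Prop :=
  ∀ a : R, a ≠ 0 → IsProperlyInfiniteElem a

/-- An idempotent `e` is infinite if `e ∼ f ≤ e` for some idempotent `f ≠ e`. -/
def IsInfiniteIdem {R : Type*} [NonUnitalRing R] (e : R) : Prop :=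
  IsIdempotentElem e ∧ ∃ f : R, IsIdempotentElem f ∧ (∃ x y : R, e = x * y ∧ f = y * x) ∧
    e * f = f ∧ f * e = f ∧ f ≠ e

/-- An exchange ring: for each `x` there are an idempotent `e` and elements `r, s` with
`e = x * r = x + s - x * s`. -/
def IsExchangeRing (R : Type*) [NonUnitalRing R] : Prop :=
  ∀ x : R, ∃ e r s : R, IsIdempotentElem e ∧ e = x * r ∧ e = x + s - x * s

/-- A ring has local units if every finite subset is contained in a corner `eRe`
for some idempotent `e`. -/
def HasLocalUnits (R : Type*) [NonUnitalRing R] : Prop :=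
  ∀ s : Finset R, ∃ e : R, IsIdempotentElem e ∧ ∀ x ∈ s, ∃ r : R, x = e * r * e

/-!
For an idempotent `e`, the set `K(e) = {x | e ⊕ x ≼ e}` is a two-sided ideal, and `e` is properly
infinite or zero as soon as `e ∈ K(e)`. Suppose `e ∉ K(e)` and let `M ⊇ K(e)` be an ideal maximal
among those avoiding `e`. If `z ∈ RgR` is orthogonal to an idempotent `g ≤ e`, then
`g + z ∈ RgR`, so `g ⊕ z ≼ g` and `z ∈ K(g) ⊆ K(e) ⊆ M`. Since every element outside `M` generates
`e` modulo `M`, applying this with `g = e` shows that `e` is an identity of `R/M`, and applying it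
to the elements of `hRgRh`, where `h = e - g`, shows that `g` is `0` or `e` modulo `M`. If `s ∉ M`
and `x s y ≡ e`, then `s y x` is a nonzero idempotent of `R/M`; the exchange property lifts it
below `e`, so it is the identity. Thus `R/M` is a division ring, which is excluded, and
every idempotent satisfies `e ⊕ e ≼ e`.

Local units transfer this from idempotents to all elements of `R`, and then to matrices: `n` copies
of a suitable idempotent lie below one, so every matrix `A` satisfies `A ≼ a ≼ A` for some `a ∈ R`.
-/

section Subequivalence

variable {R : Type*} [NonUnitalRing R]

theorem pairSub_iff {a b c : R} : PairSub a b c ↔ ∃ α₁ α₂ β₁ β₂ : R,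
    α₁ * c * β₁ = a ∧ α₁ * c * β₂ = 0 ∧ α₂ * c * β₁ = 0 ∧ α₂ * c * β₂ = b := by
  constructor
  · rintro ⟨α, β, h⟩
    have entry (i j : Fin 2) : α i 0 * c * β 0 j = !![a, 0; 0, b] i j := by
      rw [h]
      simp [Matrix.mul_apply]
    exact ⟨α 0 0, α 1 0, β 0 0, β 0 1, entry 0 0, entry 0 1, entry 1 0, entry 1 1⟩
  · rintro ⟨α₁, α₂, β₁, β₂, h₁₁, h₁₂, h₂₁, h₂₂⟩
    refine ⟨!![α₁; α₂], !![β₁, β₂], ?_⟩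
    ext i j
    fin_cases i <;> fin_cases j <;> simp [Matrix.mul_apply, h₁₁, h₁₂, h₂₁, h₂₂]

theorem PairSub.trans_matSub {k : ℕ} {A B C : Matrix (Fin k) (Fin k) R} {a b c : R}
    (h : PairSub a b c) (hA : MatSub A !![a]) (hB : MatSub B !![b]) (hC : MatSub !![c] C) :
    PairSub A B C := by
  obtain ⟨α₁, α₂, β₁, β₂, h₁₁, h₁₂, h₂₁, h₂₂⟩ := pairSub_iff.1 h
  obtain ⟨X, Y, rfl⟩ := hA
  obtain ⟨X', Y', rfl⟩ := hB
  obtain ⟨V, W, hC⟩ := hC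
  have factor (Z : Matrix (Fin k) (Fin 1) R) (T : Matrix (Fin 1) (Fin k) R) (α β : R) :
      Z * !![α] * V * C * (W * !![β] * T) = Z * !![α * c * β] * T := by
    calc Z * !![α] * V * C * (W * !![β] * T) = Z * (!![α] * (V * C * W) * !![β]) * T := by
          simp only [Matrix.mul_assoc]
      _ = Z * !![α * c * β] * T := by
          rw [← hC]
          congr 2
          ext i j
          simp [Matrix.mul_apply]
  have zero : (!![0] : Matrix (Fin 1) (Fin 1) R) = 0 := by ext; simp
  exact pairSub_iff.2 ⟨X * !![α₁] * V, X' * !![α₂] * V, W * !![β₁] * Y, W * !![β₂] * Y',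
    by rw [factor, h₁₁], by simp [factor, h₁₂, zero], by simp [factor, h₂₁, zero],
    by rw [factor, h₂₂]⟩

theorem matSub_diagonal_const {a : R} (h : PairSub a a a) (n : ℕ) :
    MatSub (Matrix.diagonal fun _ : Fin n => a) !![a] := by
  obtain ⟨α₁, α₂, β₁, β₂, h₁₁, h₁₂, h₂₁, h₂₂⟩ := pairSub_iff.1 h
  suffices ∃ x y : Fin n → R, ∀ i j, x i * a * y j = if i = j then a else 0 by
    obtain ⟨x, y, hxy⟩ := this
    refine ⟨Matrix.of fun i _ => x i, Matrix.of fun _ j => y j, ?_⟩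
    ext i j
    simp [Matrix.mul_apply, Matrix.diagonal_apply, hxy]
  induction n with
  | zero => exact ⟨Fin.elim0, Fin.elim0, fun i => i.elim0⟩
  | succ n ih =>
    obtain ⟨x, y, hxy⟩ := ih
    refine ⟨Fin.cons α₁ fun i => x i * α₂, Fin.cons β₁ fun j => β₂ * y j, ?_⟩
    refine Fin.cases (Fin.cases ?_ fun j => ?_) fun i => Fin.cases ?_ fun j => ?_
    · simp [h₁₁]
    · simp [← mul_assoc, h₁₂, (Fin.succ_ne_zero j).symm]
    · have : x i * α₂ * a * β₁ = 0 := by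
        rw [mul_assoc (x i), mul_assoc (x i), h₂₁, mul_zero]
      simp [this]
    · have : x i * α₂ * a * (β₂ * y j) = x i * (α₂ * a * β₂) * y j := by simp only [mul_assoc]
      simp [this, h₂₂, hxy]

theorem ElemSub.add (hRaR : ∀ a b : R, MemRaR a b → ElemSub b a) {a b c : R}
    (ha : ElemSub a c) (hb : ElemSub b c) : ElemSub (a + b) c := by
  obtain ⟨x, y, rfl⟩ := ha
  obtain ⟨x', y', rfl⟩ := hb
  exact hRaR c _ ⟨2, ![x, x'], ![y, y'], by simp⟩

theorem elemSub_self_of_isIdempotentElem {e : R} (he : IsIdempotentElem e) : ElemSub e e :=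
  ⟨e, e, by rw [he.eq, he.eq]⟩

end Subequivalence

section KIdeal

variable {R : Type*} [NonUnitalRing R]

/-- The set `K(a) = {x | a ⊕ x ≼ a}` as a two-sided ideal. The assumption `a ≼ a` puts `0` into it,
which is not automatic in a nonunital ring. -/
def kIdeal (a : R) (ha : ElemSub a a) : TwoSidedIdeal R :=
  .mk' (KSet a)
    (by
      obtain ⟨α, β, h⟩ := ha
      exact pairSub_iff.2 ⟨α, 0, β, 0, h.symm, by simp, by simp, by simp⟩)
    (by
      rintro x y hx hy
      obtain ⟨α₁, α₂, β₁, β₂, h₁₁, h₁₂, h₂₁, h₂₂⟩ := pairSub_iff.1 hx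
      obtain ⟨γ₁, γ₂, δ₁, δ₂, k₁₁, k₁₂, k₂₁, k₂₂⟩ := pairSub_iff.1 hy
      -- `a ⊕ (x + y) ≼ (a ⊕ x) ⊕ y ≼ a ⊕ y ≼ a`
      have absorb (u v : R) : u * γ₁ * a * (δ₁ * v) = u * a * v := by
        calc u * γ₁ * a * (δ₁ * v) = u * (γ₁ * a * δ₁) * v := by simp only [mul_assoc]
          _ = u * a * v := by rw [k₁₁]
      have right_zero (u : R) : u * γ₁ * a * δ₂ = 0 := by
        rw [mul_assoc u, mul_assoc u, k₁₂, mul_zero]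
      have left_zero (v : R) : γ₂ * a * (δ₁ * v) = 0 := by rw [← mul_assoc, k₂₁, zero_mul]
      exact pairSub_iff.2 ⟨α₁ * γ₁, α₂ * γ₁ + γ₂, δ₁ * β₁, δ₁ * β₂ + δ₂,
        by rw [absorb, h₁₁],
        by rw [mul_add, absorb, right_zero, h₁₂, add_zero],
        by rw [add_mul, add_mul, absorb, left_zero, h₂₁, add_zero],
        by rw [add_mul, add_mul, mul_add, mul_add, absorb, right_zero, left_zero, h₂₂, k₂₂,
          add_zero, zero_add]⟩)
    (by
      rintro x hx
      obtain ⟨α₁, α₂, β₁, β₂, h₁₁, h₁₂, h₂₁, h₂₂⟩ := pairSub_iff.1 hx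
      exact pairSub_iff.2 ⟨α₁, -α₂, β₁, β₂, h₁₁, h₁₂, by simp [h₂₁], by simp [h₂₂]⟩)
    (by
      rintro r x hx
      obtain ⟨α₁, α₂, β₁, β₂, h₁₁, h₁₂, h₂₁, h₂₂⟩ := pairSub_iff.1 hx
      exact pairSub_iff.2 ⟨α₁, r * α₂, β₁, β₂, h₁₁, h₁₂,
        by rw [mul_assoc r, mul_assoc r, h₂₁, mul_zero], by rw [mul_assoc r, mul_assoc r, h₂₂]⟩)
    (by
      rintro x r hx
      obtain ⟨α₁, α₂, β₁, β₂, h₁₁, h₁₂, h₂₁, h₂₂⟩ := pairSub_iff.1 hx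
      exact pairSub_iff.2 ⟨α₁, α₂, β₁, β₂ * r, h₁₁,
        by rw [← mul_assoc, h₁₂, zero_mul], h₂₁, by rw [← mul_assoc, h₂₂]⟩)

theorem mem_kIdeal_iff {a x : R} {ha : ElemSub a a} : x ∈ kIdeal a ha ↔ x ∈ KSet a :=
  TwoSidedIdeal.mem_mk' ..

theorem kSet_subset_kSet {g e : R} (he : IsIdempotentElem e) (hg : IsIdempotentElem g)
    (heg : e * g = g) (hge : g * e = g) : KSet g ⊆ KSet e := by
  intro x hx
  obtain ⟨α₁, α₂, β₁, β₂, h₁₁, h₁₂, h₂₁, h₂₂⟩ := pairSub_iff.1 hx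
  have corner (α β : R) : α * g * e * (g * β) = α * g * β := by
    rw [mul_assoc α, hge, ← mul_assoc, mul_assoc α, hg.eq]
  have right_zero (α : R) : α * g * e * (e - g) = 0 := by
    rw [mul_assoc α, hge, mul_sub, mul_assoc α, mul_assoc α, hge, hg.eq, sub_self]
  have left_zero (β : R) : (e - g) * e * (g * β) = 0 := by
    rw [sub_mul, he.eq, hge, ← mul_assoc, sub_mul, heg, hg.eq, sub_self, zero_mul]
  have compl : (e - g) * e * (e - g) = e - g := by
    rw [sub_mul, he.eq, hge, mul_sub, sub_mul, sub_mul, he.eq, hge, heg, hg.eq, sub_self, sub_zero]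
  exact pairSub_iff.2 ⟨α₁ * g + (e - g), α₂ * g, g * β₁ + (e - g), g * β₂,
    by rw [add_mul, add_mul, mul_add, mul_add, corner, right_zero, left_zero, compl, h₁₁]; abel,
    by rw [add_mul, add_mul, corner, left_zero, h₁₂, add_zero],
    by rw [mul_add, corner, right_zero, h₂₁, add_zero],
    by rw [corner, h₂₂]⟩

theorem mem_kSet_of_orthogonal {e z : R} (he : IsIdempotentElem e) (hez : e * z = 0)
    (hze : z * e = 0) (h : ElemSub (e + z) e) : z ∈ KSet e := by
  obtain ⟨p, q, hpq⟩ := h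
  have left : e * p * e * q = e := by
    rw [mul_assoc e, mul_assoc e, ← hpq, mul_add, he.eq, hez, add_zero]
  have right : p * e * (q * e) = e := by rw [← mul_assoc, ← hpq, add_mul, he.eq, hze, add_zero]
  have both : e * p * e * (q * e) = e := by rw [← mul_assoc, left, he.eq]
  -- compress `p * e * q = e + z` to the corners of `e` and `1 - e`
  exact pairSub_iff.2 ⟨e * p, p - e * p, q * e, q - q * e, both,
    by rw [mul_sub, left, both, sub_self],
    by rw [sub_mul, sub_mul, right, both, sub_self],
    by rw [sub_mul, sub_mul, mul_sub, mul_sub, left, right, both, ← hpq]; abel⟩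

end KIdeal

section TwoSidedIdeals

theorem mem_sSup_iff_of_directedOn_twoSidedIdeal {R : Type*} [NonUnitalNonAssocRing R]
    {c : Set (TwoSidedIdeal R)} (hne : c.Nonempty) (hc : DirectedOn (· ≤ ·) c) {x : R} :
    x ∈ sSup c ↔ ∃ I ∈ c, x ∈ I := by
  refine ⟨fun hx => ?_, fun ⟨I, hI, hx⟩ => (le_sSup hI : I ≤ sSup c) hx⟩
  let U : TwoSidedIdeal R := .mk' {x | ∃ I ∈ c, x ∈ I}
    (hne.imp fun I hI => ⟨hI, I.zero_mem⟩)
    (by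
      rintro x y ⟨I, hI, hx⟩ ⟨J, hJ, hy⟩
      obtain ⟨L, hL, hIL, hJL⟩ := hc I hI J hJ
      exact ⟨L, hL, L.add_mem (hIL hx) (hJL hy)⟩)
    (fun ⟨I, hI, hx⟩ => ⟨I, hI, I.neg_mem hx⟩)
    (fun ⟨I, hI, hx⟩ => ⟨I, hI, I.mul_mem_left _ _ hx⟩)
    (fun ⟨I, hI, hx⟩ => ⟨I, hI, I.mul_mem_right _ _ hx⟩)
  have mem_U {y : R} : y ∈ U ↔ ∃ I ∈ c, y ∈ I := TwoSidedIdeal.mem_mk' ..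
  have le_U : sSup c ≤ U := sSup_le fun I hI y hy => mem_U.2 ⟨I, hI, hy⟩
  exact mem_U.1 (le_U hx)

theorem exists_le_maximal_notMem_twoSidedIdeal {R : Type*} [NonUnitalNonAssocRing R]
    {I : TwoSidedIdeal R} {x : R} (hx : x ∉ I) :
    ∃ M, I ≤ M ∧ Maximal (fun J : TwoSidedIdeal R => x ∉ J) M :=
  zorn_le_nonempty₀ {J : TwoSidedIdeal R | x ∉ J} (fun c hc hchain J hJ =>
    ⟨sSup c, fun hmem =>
      let ⟨_, hL, hxL⟩ :=
        (mem_sSup_iff_of_directedOn_twoSidedIdeal ⟨J, hJ⟩ hchain.directedOn).1 hmem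
      hc hL hxL, fun _ hL => le_sSup hL⟩) I hx

variable {R : Type*} [NonUnitalRing R]

theorem elemSub_of_mem_span_singleton (hs : IsSUnitalRing R)
    (hRaR : ∀ a b : R, MemRaR a b → ElemSub b a) {a x : R}
    (hx : x ∈ TwoSidedIdeal.span {a}) : ElemSub x a := by
  induction hx using TwoSidedIdeal.span_induction with
  | mem x hx =>
    obtain ⟨⟨u, hu⟩, v, hv⟩ := hs x
    exact ⟨u, v, by rw [← Set.mem_singleton_iff.1 hx, hu, hv]⟩
  | zero => exact ⟨0, 0, by simp⟩
  | add x y _ _ ihx ihy => exact ihx.add hRaR ihy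
  | neg x _ ih =>
    obtain ⟨p, q, rfl⟩ := ih
    exact ⟨-p, q, by simp⟩
  | left_absorb r x _ ih =>
    obtain ⟨p, q, rfl⟩ := ih
    exact ⟨r * p, q, by simp only [mul_assoc]⟩
  | right_absorb r x _ ih =>
    obtain ⟨p, q, rfl⟩ := ih
    exact ⟨p, q * r, by simp only [mul_assoc]⟩

theorem exists_sub_mul_mul_mem_of_maximal_notMem (hs : IsSUnitalRing R)
    (hRaR : ∀ a b : R, MemRaR a b → ElemSub b a) {e : R} {M : TwoSidedIdeal R}
    (hM : Maximal (fun J : TwoSidedIdeal R => e ∉ J) M) {s : R} (hsM : s ∉ M) :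
    ∃ x y, e - x * s * y ∈ M := by
  have he : e ∈ M ⊔ TwoSidedIdeal.span {s} := by
    by_contra he
    exact hsM (hM.le_of_ge he le_sup_left
      (TwoSidedIdeal.mem_sup_right (TwoSidedIdeal.subset_span (Set.mem_singleton s))))
  obtain ⟨m, hm, z, hz, rfl⟩ := TwoSidedIdeal.mem_sup.1 he
  obtain ⟨x, y, rfl⟩ := elemSub_of_mem_span_singleton hs hRaR hz
  exact ⟨x, y, by simpa using hm⟩

/-- The projection `R → R/I` as a non-unital ring homomorphism (`RingCon.mk'` needs a unit). -/
def quotientHom (I : TwoSidedIdeal R) : R →ₙ+* I.ringCon.Quotient where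
  toFun r := r
  map_mul' := I.ringCon.coe_mul
  map_zero' := I.ringCon.coe_zero
  map_add' := I.ringCon.coe_add

theorem quotientHom_surjective (I : TwoSidedIdeal R) : Function.Surjective (quotientHom I) :=
  Quotient.mk''_surjective

theorem quotientHom_eq_zero_iff {I : TwoSidedIdeal R} {r : R} : quotientHom I r = 0 ↔ r ∈ I :=
  I.ringCon.eq

end TwoSidedIdeals

section Quotient

variable {R Q : Type*} [NonUnitalRing R] [NonUnitalRing Q]

theorem isDivisionRingPred_of_exists_right_inverse {u : Q} (hu : u ≠ 0)
    (hone : ∀ q, u * q = q ∧ q * u = q) (hinv : ∀ q, q ≠ 0 → ∃ r, q * r = u) :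
    IsDivisionRingPred Q := by
  refine ⟨u, hu, hone, fun q hq => ?_⟩
  obtain ⟨r, hqr⟩ := hinv q hq
  obtain ⟨t, hrt⟩ := hinv r fun hr => hu (by rw [← hqr, hr, mul_zero])
  have hqt : q = t := by
    calc q = q * (r * t) := by rw [hrt, (hone q).2]
      _ = t := by rw [← mul_assoc, hqr, (hone t).1]
  exact ⟨r, hqr, by rw [hqt, hrt]⟩

theorem IsExchangeRing.exists_isIdempotentElem_map_eq (hex : IsExchangeRing R) (π : R →ₙ+* Q)
    {e f : R} (he : IsIdempotentElem e) (hef : e * f = f) (hfe : f * e = f)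
    (hf : IsIdempotentElem (π f)) :
    ∃ g, IsIdempotentElem g ∧ e * g = g ∧ g * e = g ∧ π g = π f := by
  obtain ⟨g, r, s, hg, hgr, hgs⟩ := hex f
  have heg : e * g = g := by rw [hgr, ← mul_assoc, hef]
  have hπg : π g = π f := by
    calc π g = π f * π g := by rw [hgr, map_mul, ← mul_assoc, hf.eq]
      _ = π f := by
        rw [hgs, map_sub, map_add, map_mul, mul_sub, mul_add, ← mul_assoc, hf.eq,
          add_sub_cancel_right]
  refine ⟨g * e, ?_, by rw [← mul_assoc, heg], by rw [mul_assoc, he.eq], ?_⟩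
  · calc g * e * (g * e) = g * (e * g) * e := by simp only [mul_assoc]
      _ = g * e := by rw [heg, hg.eq]
  · rw [map_mul, hπg, ← map_mul, hfe]

variable {π : R →ₙ+* Q} {e : R}

theorem map_mul_ne_map_of_orthogonal (hRaR : ∀ a b : R, MemRaR a b → ElemSub b a)
    (he : IsIdempotentElem e) (hK : ∀ x ∈ KSet e, π x = 0) (hne : π e ≠ 0) {x w : R}
    (hxe : x * e = 0) (hew : e * w = 0) : π (x * w) ≠ π e := by
  intro hxw
  have hwex : π (w * e * x) = 0 := hK _ <| mem_kSet_of_orthogonal he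
    (by rw [← mul_assoc, ← mul_assoc, hew, zero_mul, zero_mul])
    (by rw [mul_assoc, hxe, mul_zero]) ((elemSub_self_of_isIdempotentElem he).add hRaR ⟨w, x, rfl⟩)
  apply hne
  calc π e = π (x * w) * π e * π (x * w) := by rw [hxw, ← map_mul, he.eq, ← map_mul, he.eq]
    _ = π x * π (w * e * x) * π w := by simp only [map_mul, mul_assoc]
    _ = 0 := by rw [hwex, mul_zero, zero_mul]

theorem map_mul_map_generator (hRaR : ∀ a b : R, MemRaR a b → ElemSub b a)
    (he : IsIdempotentElem e) (hK : ∀ x ∈ KSet e, π x = 0) (hne : π e ≠ 0)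
    (hgen : ∀ s, π s ≠ 0 → ∃ x y, π (x * s * y) = π e) (r : R) : π r * π e = π r := by
  by_contra hr
  obtain ⟨x, y, hxy⟩ := hgen (r - r * e) (by rwa [map_sub, map_mul, sub_ne_zero, ne_comm])
  have hre : (r - r * e) * e = 0 := by rw [sub_mul, mul_assoc, he.eq, sub_self]
  refine map_mul_ne_map_of_orthogonal hRaR he hK hne (x := x * (r - r * e)) (w := y - e * y)
    (by rw [mul_assoc, hre, mul_zero]) (by rw [mul_sub, ← mul_assoc, he.eq, sub_self]) ?_
  rw [mul_sub, ← mul_assoc _ e, mul_assoc x _ e, hre, mul_zero, zero_mul, sub_zero, hxy]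

theorem map_generator_mul_map (hRaR : ∀ a b : R, MemRaR a b → ElemSub b a)
    (he : IsIdempotentElem e) (hK : ∀ x ∈ KSet e, π x = 0) (hne : π e ≠ 0)
    (hgen : ∀ s, π s ≠ 0 → ∃ x y, π (x * s * y) = π e) (r : R) : π e * π r = π r := by
  by_contra hr
  obtain ⟨x, y, hxy⟩ := hgen (r - e * r) (by rwa [map_sub, map_mul, sub_ne_zero, ne_comm])
  have her : e * (r - e * r) = 0 := by rw [mul_sub, ← mul_assoc, he.eq, sub_self]
  refine map_mul_ne_map_of_orthogonal hRaR he hK hne (x := x - x * e) (w := (r - e * r) * y)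
    (by rw [sub_mul, mul_assoc, he.eq, sub_self]) (by rw [← mul_assoc, her, zero_mul]) ?_
  rw [sub_mul, mul_assoc x e, ← mul_assoc e, her, zero_mul, mul_zero, sub_zero, ← mul_assoc, hxy]

theorem map_eq_of_isIdempotentElem_le (hRaR : ∀ a b : R, MemRaR a b → ElemSub b a)
    (he : IsIdempotentElem e) (hK : ∀ x ∈ KSet e, π x = 0)
    (hgen : ∀ s, π s ≠ 0 → ∃ x y, π (x * s * y) = π e) {g : R} (hg : IsIdempotentElem g)
    (heg : e * g = g) (hge : g * e = g) (hπg : π g ≠ 0) : π g = π e := by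
  obtain ⟨x, y, hxy⟩ := hgen g hπg
  have hgh : g * (e - g) = 0 := by rw [mul_sub, hge, hg.eq, sub_self]
  have hhg : (e - g) * g = 0 := by rw [sub_mul, heg, hg.eq, sub_self]
  have hheh : (e - g) * e * (e - g) = e - g := by
    rw [sub_mul, he.eq, hge, mul_sub, hhg, sub_zero, sub_mul, he.eq, hge]
  have hmem : (e - g) * x * g * (y * (e - g)) ∈ KSet g := mem_kSet_of_orthogonal hg
    (by simp only [← mul_assoc, hgh, zero_mul]) (by simp only [mul_assoc, hhg, mul_zero])
    ((elemSub_self_of_isIdempotentElem hg).add hRaR ⟨_, _, rfl⟩)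
  have hzero : π (e - g) = 0 := by
    calc π (e - g) = π (e - g) * π (x * g * y) * π (e - g) := by
          rw [hxy, ← map_mul, ← map_mul, hheh]
      _ = π ((e - g) * x * g * (y * (e - g))) := by simp only [map_mul, mul_assoc]
      _ = 0 := hK _ (kSet_subset_kSet he hg heg hge hmem)
  rw [map_sub, sub_eq_zero] at hzero
  exact hzero.symm

theorem exists_map_mul_map_eq (hex : IsExchangeRing R)
    (hRaR : ∀ a b : R, MemRaR a b → ElemSub b a) (he : IsIdempotentElem e)
    (hK : ∀ x ∈ KSet e, π x = 0) (hne : π e ≠ 0)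
    (hgen : ∀ s, π s ≠ 0 → ∃ x y, π (x * s * y) = π e) {s : R} (hs : π s ≠ 0) :
    ∃ y, π s * π y = π e := by
  have mul_e := map_mul_map_generator hRaR he hK hne hgen
  have e_mul := map_generator_mul_map hRaR he hK hne hgen
  obtain ⟨x, y, hxy⟩ := hgen s hs
  have hf : π (e * (s * y * x) * e) = π s * π y * π x := by
    rw [map_mul, mul_e, map_mul, e_mul, map_mul, map_mul]
  have hf_idem : IsIdempotentElem (π (e * (s * y * x) * e)) := by
    rw [hf]
    calc π s * π y * π x * (π s * π y * π x) = π s * π y * (π (x * s * y) * π x) := by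
          simp only [map_mul, mul_assoc]
      _ = π s * π y * π x := by rw [hxy, e_mul]
  obtain ⟨g, hg, heg, hge, hgf⟩ := hex.exists_isIdempotentElem_map_eq π he
    (by simp only [← mul_assoc, he.eq]) (by rw [mul_assoc, he.eq]) hf_idem
  rw [hf] at hgf
  have hπg : π g ≠ 0 := by
    intro hzero
    apply hne
    calc π e = π (x * s * y) * π (x * s * y) := by rw [hxy, ← map_mul, he.eq]
      _ = π x * (π s * π y * π x) * (π s * π y) := by simp only [map_mul, mul_assoc]
      _ = 0 := by rw [← hgf, hzero, mul_zero, zero_mul]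
  refine ⟨y * x, ?_⟩
  rw [map_mul, ← mul_assoc, ← hgf, map_eq_of_isIdempotentElem_le hRaR he hK hgen hg heg hge hπg]

theorem isDivisionRingPred_of_surjective (hex : IsExchangeRing R)
    (hRaR : ∀ a b : R, MemRaR a b → ElemSub b a) (he : IsIdempotentElem e)
    (hπ : Function.Surjective π) (hK : ∀ x ∈ KSet e, π x = 0) (hne : π e ≠ 0)
    (hgen : ∀ s, π s ≠ 0 → ∃ x y, π (x * s * y) = π e) : IsDivisionRingPred Q :=
  isDivisionRingPred_of_exists_right_inverse hne
    (hπ.forall.2 fun r => ⟨map_generator_mul_map hRaR he hK hne hgen r,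
      map_mul_map_generator hRaR he hK hne hgen r⟩)
    (hπ.forall.2 fun _ hs =>
      let ⟨y, hy⟩ := exists_map_mul_map_eq hex hRaR he hK hne hgen hs
      ⟨π y, hy⟩)

end Quotient

section ProperlyInfinite

variable {R : Type*} [NonUnitalRing R]

theorem pairSub_self_of_isIdempotentElem {e : R} (he : IsIdempotentElem e) (hs : IsSUnitalRing R)
    (hex : IsExchangeRing R) (hpi : IsPurelyInfiniteRing R) : PairSub e e e := by
  by_contra hK
  obtain ⟨M, hKM, hM⟩ := exists_le_maximal_notMem_twoSidedIdeal
    (I := kIdeal e (elemSub_self_of_isIdempotentElem he)) (mem_kIdeal_iff.not.2 hK)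
  refine hpi.1 M (isDivisionRingPred_of_surjective hex hpi.2 he (quotientHom_surjective M)
    (fun x hx => quotientHom_eq_zero_iff.2 (hKM (mem_kIdeal_iff.2 hx)))
    (quotientHom_eq_zero_iff.not.2 hM.prop) fun s hsM => ?_)
  obtain ⟨x, y, hxy⟩ := exists_sub_mul_mul_mem_of_maximal_notMem hs hpi.2 hM
    (quotientHom_eq_zero_iff.not.1 hsM)
  rw [← quotientHom_eq_zero_iff, map_sub, sub_eq_zero] at hxy
  exact ⟨x, y, hxy.symm⟩

theorem exists_left_unit_of_finite (h : ∀ x : R, ∃ u, u * x = x) {s : Set R} (hs : s.Finite) :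
    ∃ u, ∀ x ∈ s, u * x = x := by
  induction s, hs using Set.Finite.induction_on with
  | empty => exact ⟨0, by simp⟩
  | @insert y s _ _ ih =>
    obtain ⟨u, hu⟩ := ih
    obtain ⟨v, hv⟩ := h (y - u * y)
    -- `1 - (u + (v - v * u)) = (1 - v) * (1 - u)`
    have expand (x : R) : (u + (v - v * u)) * x = u * x + v * (x - u * x) := by
      rw [add_mul, sub_mul, mul_sub, mul_assoc]
    refine ⟨u + (v - v * u), Set.forall_mem_insert.2 ⟨?_, fun x hx => ?_⟩⟩
    · rw [expand, hv, add_sub_cancel]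
    · rw [expand, hu x hx, sub_self, mul_zero, add_zero]

theorem exists_right_unit_of_finite (h : ∀ x : R, ∃ v, x * v = x) {s : Set R} (hs : s.Finite) :
    ∃ v, ∀ x ∈ s, x * v = x := by
  have hop (x : Rᵐᵒᵖ) : ∃ u, u * x = x :=
    let ⟨v, hv⟩ := h x.unop
    ⟨.op v, MulOpposite.unop_injective hv⟩
  obtain ⟨u, hu⟩ := exists_left_unit_of_finite hop (hs.image MulOpposite.op)
  exact ⟨u.unop, fun x hx => MulOpposite.op_injective (hu _ (Set.mem_image_of_mem _ hx))⟩

theorem IsExchangeRing.exists_isIdempotentElem_right_unit (hex : IsExchangeRing R) (v : R) :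
    ∃ g, IsIdempotentElem g ∧ ∀ x, x * v = x → x * g = x := by
  obtain ⟨g, -, s, hg, -, hgs⟩ := hex v
  refine ⟨g, hg, fun x hx => ?_⟩
  rw [hgs, mul_sub, mul_add, ← mul_assoc, hx, add_sub_cancel_right]

theorem exists_left_unit_and_idempotent_right_unit (hs : IsSUnitalRing R) (hex : IsExchangeRing R)
    {s : Set R} (hfin : s.Finite) :
    ∃ u g, IsIdempotentElem g ∧ u * g = u ∧ ∀ x ∈ s, u * x = x ∧ x * g = x := by
  obtain ⟨u, hu⟩ := exists_left_unit_of_finite (fun x => (hs x).1) hfin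
  obtain ⟨v, hv⟩ := exists_right_unit_of_finite (fun x => (hs x).2) (hfin.insert u)
  obtain ⟨g, hg, hvg⟩ := hex.exists_isIdempotentElem_right_unit v
  rw [Set.forall_mem_insert] at hv
  exact ⟨u, g, hg, hvg u hv.1, fun x hx => ⟨hu x hx, hvg x (hv.2 x hx)⟩⟩

theorem PairSub.of_local_unit (hRaR : ∀ a b : R, MemRaR a b → ElemSub b a) {a u g : R}
    (hg : PairSub g g g) (hug : u * g = u) (hua : u * a = a) (hag : a * g = a) :
    PairSub a a a := by
  obtain ⟨α₁, α₂, β₁, β₂, h₁₁, h₁₂, h₂₁, h₂₂⟩ := pairSub_iff.1 hg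
  -- `αᵢ * g * βⱼ = δᵢⱼ * g`, so the sum of the `βᵢ * a * αᵢ` contains two orthogonal copies of `a`
  obtain ⟨p, q, hpq⟩ : ElemSub (β₁ * a * α₁ + β₂ * a * α₂) a :=
    ElemSub.add hRaR ⟨β₁, α₁, rfl⟩ ⟨β₂, α₂, rfl⟩
  have expand (α β : R) : u * α * g * p * a * (q * g * β) =
      u * (α * g * β₁) * a * (α₁ * g * β) + u * (α * g * β₂) * a * (α₂ * g * β) := by
    calc u * α * g * p * a * (q * g * β) = u * α * g * (p * a * q) * (g * β) := by
          simp only [mul_assoc]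
      _ = _ := by rw [← hpq]; simp only [mul_add, add_mul, mul_assoc]
  have uag : u * g * a * g = a := by rw [hug, hua, hag]
  exact pairSub_iff.2 ⟨u * α₁ * g * p, u * α₂ * g * p, q * g * β₁, q * g * β₂,
    by simp [expand, h₁₁, h₁₂, uag], by simp [expand, h₁₁, h₁₂, h₂₂],
    by simp [expand, h₁₁, h₂₁, h₂₂], by simp [expand, h₂₁, h₂₂, uag]⟩

theorem pairSub_self (hs : IsSUnitalRing R) (hex : IsExchangeRing R)
    (hpi : IsPurelyInfiniteRing R) (a : R) : PairSub a a a := by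
  obtain ⟨u, g, hg, hug, hu⟩ :=
    exists_left_unit_and_idempotent_right_unit hs hex (Set.finite_singleton a)
  obtain ⟨hua, hag⟩ := hu a rfl
  exact .of_local_unit hpi.2 (pairSub_self_of_isIdempotentElem hg hs hex hpi) hug hua hag

theorem exists_matSub_and_matSub {n : ℕ} {A : Matrix (Fin n) (Fin n) R} {u g : R}
    (hg : PairSub g g g) (hug : u * g = u) (huA : ∀ i j, u * A i j = A i j)
    (hAg : ∀ i j, A i j * g = A i j) :
    ∃ a : R, MatSub A !![a] ∧ MatSub !![a] A := by
  obtain ⟨X, Y, hXY⟩ := matSub_diagonal_const hg n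
  let U : Matrix (Fin n) (Fin n) R := Matrix.diagonal fun _ => u
  let G : Matrix (Fin n) (Fin n) R := Matrix.diagonal fun _ => g
  have hUG : U * G = U := by simp [U, G, hug]
  have hUA : U * A = A := by ext; simp [U, huA]
  have hAG : A * G = A := by ext; simp [G, hAg]
  refine ⟨(Y * A * X) 0 0, ?_⟩
  have eta : !![(Y * A * X) 0 0] = Y * A * X := by
    ext i j
    simp [Fin.fin_one_eq_zero]
  rw [eta]
  refine ⟨⟨U * X * !![g], !![g] * Y, ?_⟩, Y, X, rfl⟩
  calc A = U * G * A * G := by rw [hUG, hUA, hAG]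
    _ = U * X * !![g] * (Y * A * X) * (!![g] * Y) := by
      simp only [G, hXY, Matrix.mul_assoc]

end ProperlyInfinite

/-- Theorem 5.9 (ExchangePiMatrices): let `R` be an s-unital purely infinite exchange ring.
Then `Mₙ(R)` is properly purely infinite for every `n ≥ 1`. -/
theorem matrix_properlyPurelyInfinite_of_sunital_exchange {R : Type*} [NonUnitalRing R]
    (hs : IsSUnitalRing R) (hex : IsExchangeRing R) (hpi : IsPurelyInfiniteRing R) :
    ∀ n : ℕ, 0 < n → IsProperlyPurelyInfiniteRing (Matrix (Fin n) (Fin n) R) := by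
  intro n _ A hA
  obtain ⟨u, g, hg, hug, hu⟩ := exists_left_unit_and_idempotent_right_unit hs hex
    (Set.finite_range fun ij : Fin n × Fin n => A ij.1 ij.2)
  have entry (i j : Fin n) : u * A i j = A i j ∧ A i j * g = A i j := hu _ ⟨(i, j), rfl⟩
  have hgg : PairSub g g g := pairSub_self_of_isIdempotentElem hg hs hex hpi
  obtain ⟨a, hAa, haA⟩ := exists_matSub_and_matSub hgg hug
    (fun i j => (entry i j).1) fun i j => (entry i j).2
  exact ⟨hA, (pairSub_self hs hex hpi a).trans_matSub hAa hAa haA⟩
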